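/- Suppose there exists θ^L ∈ (0,1) such that u''(θ) < 0 for all θ ∈ [0,θ^L) at which u'' exists, and u''(θ) > 0 for all θ ∈ (θ^L,1] at which u'' exists. If there is no θ_*^L ∈ (θ^L,1) satisfying u(m) + u'(m)·(θ_*^L − m) = u(θ_*^L) with m = E_F[θ|(0,θ_*^L)], then complete pooling P_* = [0,1] is optimal for u, and E_F[θ] ∈ (0,θ^L). -/

import Mathlib

open MeasureTheory Set
open scoped Classical

noncomputable section

/-- CDF associated with the density `f` (relevant on `[0,1]`): `F(x) = ∫_0^x f`. -/
def cdfF (f : ℝ → ℝ) (x : ℝ) : ℝ := ∫ t in (0:ℝ)..x, f t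

/-- Conditional mean `E_F[θ | (ξ,ζ)]` of `θ` on the interval `(ξ, ζ)` under density `f`. -/
def condMean (f : ℝ → ℝ) (ξ ζ : ℝ) : ℝ :=
  (∫ t in ξ..ζ, t * f t) / (∫ t in ξ..ζ, f t)

/-- `f` is a strictly positive density of a probability measure on `[0,1]`. -/
def IsDensity (f : ℝ → ℝ) : Prop :=
  (∀ θ ∈ Icc (0:ℝ) 1, 0 < f θ) ∧ IntegrableOn f (Icc (0:ℝ) 1) ∧
    (∫ t in (0:ℝ)..1, f t) = 1

/-- An open pooling set: a relatively open subset of `[0,1]`. -/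
def IsPoolingSet (P : Set ℝ) : Prop :=
  ∃ U : Set ℝ, IsOpen U ∧ P = U ∩ Icc (0:ℝ) 1

/-- Left endpoint `ξ_i` of the interval component of `θ` in `P`. -/
def compInf (P : Set ℝ) (θ : ℝ) : ℝ := sInf (connectedComponentIn P θ)

/-- Right endpoint `ζ_i` of the interval component of `θ` in `P`. -/
def compSup (P : Set ℝ) (θ : ℝ) : ℝ := sSup (connectedComponentIn P θ)

/-- The posterior-mean map induced by the pooling set `P`: states in a pooled
interval are mapped to the conditional mean of that interval, other states to
themselves. -/
def poolMean (f : ℝ → ℝ) (P : Set ℝ) (θ : ℝ) : ℝ :=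
  if θ ∈ P then condMean f (compInf P θ) (compSup P θ) else θ

/-- The induced distribution `G_P` of posterior means. -/
def Gp (f : ℝ → ℝ) (P : Set ℝ) (θ : ℝ) : ℝ :=
  if θ ∈ P then
    (if θ < condMean f (compInf P θ) (compSup P θ) then cdfF f (compInf P θ)
     else cdfF f (compSup P θ))
  else cdfF f θ

/-- `Γ_P(θ) = ∫_0^θ G_P(t) dt`. -/
def Gam (f : ℝ → ℝ) (P : Set ℝ) (θ : ℝ) : ℝ := ∫ t in (0:ℝ)..θ, Gp f P t

/-- The value `∫_0^1 u(θ) dG_P(θ)` of the pooling set `P` under payoff `u`,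
written as the expectation of `u` composed with the posterior-mean map. -/
def poolValue (f : ℝ → ℝ) (u : ℝ → ℝ) (P : Set ℝ) : ℝ :=
  ∫ θ in (0:ℝ)..1, u (poolMean f P θ) * f θ

/-- `P` is an optimal pooling set for `u`. -/
def IsOptimal (f : ℝ → ℝ) (u : ℝ → ℝ) (P : Set ℝ) : Prop :=
  IsPoolingSet P ∧ ∀ Q : Set ℝ, IsPoolingSet Q → poolValue f u Q ≤ poolValue f u P

/-- `u` is continuously differentiable on `[0,1]` with derivative `u'`, and `u'`
is absolutely continuous with integrable a.e. derivative `u''` (encoded via the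
fundamental theorem of calculus). -/
def C1AC (u u' u'' : ℝ → ℝ) : Prop :=
  (∀ θ ∈ Icc (0:ℝ) 1, HasDerivAt u (u' θ) θ) ∧
  ContinuousOn u' (Icc (0:ℝ) 1) ∧
  IntegrableOn u'' (Icc (0:ℝ) 1) ∧
  (∀ θ ∈ Icc (0:ℝ) 1, u' θ = u' 0 + ∫ t in (0:ℝ)..θ, u'' t)

/-!
Pooling a component replaces the states in it by their conditional mean, so it preserves the overall
mean `m = E_F[θ]`. Hence, if an affine function through `(m, u m)` lies above `u` on `[0,1]`, no
pooling set is worth more than `u m`, which is the value of complete pooling. The tangent to `u` at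
`m` is such an affine function: the tangent at the conditional mean of `[0, x]` passes above
`(x, u x)` when `x = θ^L`, by strict concavity, and since equality never occurs for `x ∈ (θ^L, 1)`
it does not pass below `(x, u x)` at `x = 1`. If `m ≥ θ^L`, this would contradict strict convexity
on `[θ^L, 1]`; so `m < θ^L`, the tangent lies above `u` on the concave part, and on the convex part
it suffices that it does so at both ends.
-/

section ConnectedComponentsIn

variable {α : Type*} [TopologicalSpace α]

/-- The connected components of a subset `P`, as a family of subsets of the ambient space. For a
pooling set these are the intervals `(ξ_i, ζ_i)`, up to endpoints at `0` and `1`. -/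
def connectedComponentsIn (P : Set α) : Set (Set α) := connectedComponentIn P '' P

theorem sUnion_connectedComponentsIn (P : Set α) : ⋃₀ connectedComponentsIn P = P := by
  refine Subset.antisymm (sUnion_subset ?_) fun x hx =>
    mem_sUnion_of_mem (mem_connectedComponentIn hx) (mem_image_of_mem _ hx)
  rintro _ ⟨x, -, rfl⟩
  exact connectedComponentIn_subset P x

theorem pairwiseDisjoint_connectedComponentsIn (P : Set α) :
    (connectedComponentsIn P).PairwiseDisjoint id := by
  rintro _ ⟨x, -, rfl⟩ _ ⟨y, -, rfl⟩ hne
  refine Set.disjoint_left.2 fun z hzx hzy => hne ?_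
  exact (connectedComponentIn_eq hzx).trans (connectedComponentIn_eq hzy).symm

theorem measurableSet_connectedComponentIn [LinearOrder α] [OrderTopology α]
    [SecondCountableTopology α] [MeasurableSpace α] [BorelSpace α] (P : Set α) (x : α) :
    MeasurableSet (connectedComponentIn P x) :=
  isPreconnected_connectedComponentIn.ordConnected.measurableSet

theorem ae_eq_Ioc_csInf_csSup_of_isConnected [ConditionallyCompleteLinearOrder α]
    [OrderTopology α] [MeasurableSpace α] {μ : Measure α} [NullSingletonClass μ] {s : Set α}
    (hs : IsConnected s) (hb : BddBelow s) (ha : BddAbove s) : s =ᵐ[μ] Ioc (sInf s) (sSup s) :=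
  Filter.EventuallyLE.antisymm
    ((subset_Icc_csInf_csSup hb ha).eventuallyLE.trans_eq Ioc_ae_eq_Icc.symm)
    (Ioo_ae_eq_Ioc.symm.trans_le (hs.Ioo_csInf_csSup_subset hb ha).eventuallyLE)

end ConnectedComponentsIn

namespace IsPoolingSet

variable {P : Set ℝ} {θ : ℝ}

theorem subset_Icc (hP : IsPoolingSet P) : P ⊆ Icc 0 1 := by
  obtain ⟨U, -, rfl⟩ := hP
  exact inter_subset_right

theorem measurableSet (hP : IsPoolingSet P) : MeasurableSet P := by
  obtain ⟨U, hU, rfl⟩ := hP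
  exact hU.measurableSet.inter measurableSet_Icc

theorem nonempty_interior_connectedComponentIn (hP : IsPoolingSet P) (hθ : θ ∈ P) :
    (interior (connectedComponentIn P θ)).Nonempty := by
  obtain ⟨U, hU, rfl⟩ := hP
  obtain ⟨ε, hε, hball⟩ := Metric.isOpen_iff.1 hU θ hθ.1
  rw [Real.ball_eq_Ioo] at hball
  have hθε : θ ∈ Ioo (θ - ε) (θ + ε) := ⟨by linarith, by linarith⟩
  have hsub : Ioo (θ - ε) (θ + ε) ∩ Icc 0 1 ⊆ connectedComponentIn (U ∩ Icc 0 1) θ :=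
    (ordConnected_Ioo.inter ordConnected_Icc).isPreconnected.subset_connectedComponentIn
      ⟨hθε, hθ.2⟩ (inter_subset_inter_left _ hball)
  have hclosure : θ ∈ closure (Ioo (0 : ℝ) 1) := by
    rw [closure_Ioo zero_ne_one]
    exact hθ.2
  refine (mem_closure_iff.1 hclosure _ isOpen_Ioo hθε).mono (interior_maximal ?_
    (isOpen_Ioo.inter isOpen_Ioo))
  exact (inter_subset_inter_right _ Ioo_subset_Icc_self).trans hsub

theorem countable_connectedComponentsIn (hP : IsPoolingSet P) :
    (connectedComponentsIn P).Countable := by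
  refine (pairwiseDisjoint_connectedComponentsIn P).countable_of_nonempty_interior ?_
  rintro _ ⟨θ, hθ, rfl⟩
  exact hP.nonempty_interior_connectedComponentIn hθ

theorem connectedComponentIn_subset_Icc (hP : IsPoolingSet P) :
    connectedComponentIn P θ ⊆ Icc 0 1 :=
  (connectedComponentIn_subset P θ).trans hP.subset_Icc

theorem compInf_nonneg (hP : IsPoolingSet P) (hθ : θ ∈ P) : 0 ≤ compInf P θ :=
  le_csInf ⟨θ, mem_connectedComponentIn hθ⟩ fun _ ht => (hP.connectedComponentIn_subset_Icc ht).1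

theorem compSup_le_one (hP : IsPoolingSet P) (hθ : θ ∈ P) : compSup P θ ≤ 1 :=
  csSup_le ⟨θ, mem_connectedComponentIn hθ⟩ fun _ ht => (hP.connectedComponentIn_subset_Icc ht).2

theorem compInf_lt_compSup (hP : IsPoolingSet P) (hθ : θ ∈ P) : compInf P θ < compSup P θ := by
  have hsub : connectedComponentIn P θ ⊆ Icc (compInf P θ) (compSup P θ) :=
    subset_Icc_csInf_csSup (bddBelow_Icc.mono hP.connectedComponentIn_subset_Icc)
      (bddAbove_Icc.mono hP.connectedComponentIn_subset_Icc)
  have hne := (hP.nonempty_interior_connectedComponentIn hθ).mono (interior_mono hsub)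
  rwa [interior_Icc, nonempty_Ioo] at hne

theorem connectedComponentIn_ae_eq_Ioc (hP : IsPoolingSet P) (hθ : θ ∈ P) :
    connectedComponentIn P θ =ᵐ[volume] Ioc (compInf P θ) (compSup P θ) :=
  ae_eq_Ioc_csInf_csSup_of_isConnected (isConnected_connectedComponentIn_iff.2 hθ)
    (bddBelow_Icc.mono hP.connectedComponentIn_subset_Icc)
    (bddAbove_Icc.mono hP.connectedComponentIn_subset_Icc)

theorem setIntegral_eq_zero_of_components (hP : IsPoolingSet P) {g : ℝ → ℝ} (hg : IntegrableOn g P)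
    (hzero : ∀ θ ∈ P, ∫ t in connectedComponentIn P θ, g t = 0) : ∫ t in P, g t = 0 := by
  have := hP.countable_connectedComponentsIn.to_subtype
  have hmeas : ∀ C : connectedComponentsIn P, MeasurableSet (C : Set ℝ) := by
    rintro ⟨_, θ, -, rfl⟩
    exact measurableSet_connectedComponentIn P θ
  rw [← sUnion_connectedComponentsIn P, sUnion_eq_iUnion] at hg ⊢
  rw [integral_iUnion hmeas ((pairwiseDisjoint_connectedComponentsIn P).subtype _ _) hg]
  refine (tsum_congr ?_).trans tsum_zero
  rintro ⟨_, θ, hθ, rfl⟩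
  exact hzero θ hθ

theorem aestronglyMeasurable_of_components (hP : IsPoolingSet P) {g : ℝ → ℝ}
    (hg : ∀ θ ∈ P, AEStronglyMeasurable g (volume.restrict (connectedComponentIn P θ))) :
    AEStronglyMeasurable g (volume.restrict P) := by
  have := hP.countable_connectedComponentsIn.to_subtype
  rw [← sUnion_connectedComponentsIn P, sUnion_eq_iUnion, aestronglyMeasurable_iUnion_iff]
  rintro ⟨_, θ, hθ, rfl⟩
  exact hg θ hθ

end IsPoolingSet

section CondMean

variable {f : ℝ → ℝ} {ξ ζ : ℝ}

theorem condMean_mem_Ioo (hξζ : ξ < ζ) (hf : IntervalIntegrable f volume ξ ζ)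
    (hpos : ∀ θ ∈ Ioo ξ ζ, 0 < f θ) : condMean f ξ ζ ∈ Ioo ξ ζ := by
  have hθf : IntervalIntegrable (fun θ => θ * f θ) volume ξ ζ := hf.continuousOn_mul continuousOn_id
  have hmass : 0 < ∫ θ in ξ..ζ, f θ := intervalIntegral.intervalIntegral_pos_of_pos_on hf hpos hξζ
  have hleft : 0 < ∫ θ in ξ..ζ, (θ * f θ - ξ * f θ) :=
    intervalIntegral.intervalIntegral_pos_of_pos_on (hθf.sub (hf.const_mul ξ))
      (fun θ hθ => by simpa only [sub_mul] using mul_pos (sub_pos.2 hθ.1) (hpos θ hθ)) hξζ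
  have hright : 0 < ∫ θ in ξ..ζ, (ζ * f θ - θ * f θ) :=
    intervalIntegral.intervalIntegral_pos_of_pos_on ((hf.const_mul ζ).sub hθf)
      (fun θ hθ => by simpa only [sub_mul] using mul_pos (sub_pos.2 hθ.2) (hpos θ hθ)) hξζ
  rw [intervalIntegral.integral_sub hθf (hf.const_mul ξ), intervalIntegral.integral_const_mul,
    sub_pos] at hleft
  rw [intervalIntegral.integral_sub (hf.const_mul ζ) hθf, intervalIntegral.integral_const_mul,
    sub_pos] at hright
  exact ⟨(lt_div_iff₀ hmass).2 hleft, (div_lt_iff₀ hmass).2 hright⟩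

theorem integral_condMean_sub_mul (hf : IntervalIntegrable f volume ξ ζ)
    (hmass : ∫ θ in ξ..ζ, f θ ≠ 0) : ∫ θ in ξ..ζ, (condMean f ξ ζ - θ) * f θ = 0 := by
  have hθf : IntervalIntegrable (fun θ => θ * f θ) volume ξ ζ := hf.continuousOn_mul continuousOn_id
  simp only [sub_mul]
  rw [intervalIntegral.integral_sub (hf.const_mul _) hθf,
    intervalIntegral.integral_const_mul, condMean, div_mul_cancel₀ _ hmass, sub_self]

end CondMean

namespace IsDensity

variable {f : ℝ → ℝ} {ξ ζ : ℝ}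

theorem intervalIntegrable (hf : IsDensity f) (hξ : 0 ≤ ξ) (hξζ : ξ ≤ ζ) (hζ : ζ ≤ 1) :
    IntervalIntegrable f volume ξ ζ :=
  (intervalIntegrable_iff_integrableOn_Icc_of_le hξζ).2 (hf.2.1.mono_set (Icc_subset_Icc hξ hζ))

theorem integral_pos (hf : IsDensity f) (hξ : 0 ≤ ξ) (hξζ : ξ < ζ) (hζ : ζ ≤ 1) :
    0 < ∫ θ in ξ..ζ, f θ :=
  intervalIntegral.intervalIntegral_pos_of_pos_on (hf.intervalIntegrable hξ hξζ.le hζ)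
    (fun θ hθ => hf.1 θ ⟨hξ.trans hθ.1.le, hθ.2.le.trans hζ⟩) hξζ

theorem condMean_mem_Ioo (hf : IsDensity f) (hξ : 0 ≤ ξ) (hξζ : ξ < ζ) (hζ : ζ ≤ 1) :
    condMean f ξ ζ ∈ Ioo ξ ζ :=
  _root_.condMean_mem_Ioo hξζ (hf.intervalIntegrable hξ hξζ.le hζ)
    fun θ hθ => hf.1 θ ⟨hξ.trans hθ.1.le, hθ.2.le.trans hζ⟩

theorem condMean_zero_one (hf : IsDensity f) : condMean f 0 1 = ∫ θ in (0 : ℝ)..1, θ * f θ := by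
  rw [condMean, hf.2.2, div_one]

theorem continuousOn_condMean_zero (hf : IsDensity f) :
    ContinuousOn (condMean f 0) (Ioc 0 1) := by
  have hsub : Ioc (0 : ℝ) 1 ⊆ uIcc 0 1 := Ioc_subset_Icc_self.trans Icc_subset_uIcc
  have hint := hf.intervalIntegrable le_rfl zero_le_one le_rfl
  exact ((intervalIntegral.continuousOn_primitive_interval'
      (hint.continuousOn_mul continuousOn_id) left_mem_uIcc).mono hsub).div
    ((intervalIntegral.continuousOn_primitive_interval' hint left_mem_uIcc).mono hsub)
    fun x hx => (hf.integral_pos le_rfl hx.1 hx.2).ne'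

end IsDensity

section PoolMean

variable {f g u : ℝ → ℝ} {P : Set ℝ} {θ θ' : ℝ}

theorem poolMean_of_mem_connectedComponentIn (hθ' : θ' ∈ connectedComponentIn P θ) :
    poolMean f P θ' = condMean f (compInf P θ) (compSup P θ) := by
  rw [poolMean, if_pos (connectedComponentIn_subset P θ hθ'), compInf, compSup, compInf, compSup,
    connectedComponentIn_eq hθ']

theorem poolMean_Icc (hθ : θ ∈ Icc (0 : ℝ) 1) : poolMean f (Icc 0 1) θ = condMean f 0 1 := by
  rw [poolMean, if_pos hθ, compInf, compSup, isPreconnected_Icc.connectedComponentIn hθ,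
    csInf_Icc zero_le_one, csSup_Icc zero_le_one]

theorem poolMean_mem_Icc (hf : IsDensity f) (hP : IsPoolingSet P) (hθ : θ ∈ Icc (0 : ℝ) 1) :
    poolMean f P θ ∈ Icc (0 : ℝ) 1 := by
  by_cases hθP : θ ∈ P
  · rw [poolMean, if_pos hθP]
    exact Ioo_subset_Icc_self.trans
      (Icc_subset_Icc (hP.compInf_nonneg hθP) (hP.compSup_le_one hθP))
      (hf.condMean_mem_Ioo (hP.compInf_nonneg hθP) (hP.compInf_lt_compSup hθP)
        (hP.compSup_le_one hθP))
  · rwa [poolMean, if_neg hθP]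

theorem aestronglyMeasurable_comp_poolMean (hP : IsPoolingSet P)
    (hg : AEStronglyMeasurable g (volume.restrict (Icc 0 1))) :
    AEStronglyMeasurable (fun θ => g (poolMean f P θ)) (volume.restrict (Icc 0 1)) := by
  rw [← union_sdiff_cancel hP.subset_Icc, aestronglyMeasurable_union_iff]
  constructor
  · refine hP.aestronglyMeasurable_of_components fun θ _ =>
      (aestronglyMeasurable_const (b := g (condMean f (compInf P θ) (compSup P θ)))).congr ?_
    filter_upwards [ae_restrict_mem (measurableSet_connectedComponentIn P θ)] with t ht
    rw [poolMean_of_mem_connectedComponentIn ht]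
  · refine (hg.mono_set sdiff_subset).congr ?_
    filter_upwards [ae_restrict_mem (measurableSet_Icc.diff hP.measurableSet)] with θ hθ
    rw [poolMean, if_neg hθ.2]

theorem intervalIntegrable_comp_poolMean_mul (hf : IsDensity f) (hP : IsPoolingSet P)
    (hg : ContinuousOn g (Icc 0 1)) :
    IntervalIntegrable (fun θ => g (poolMean f P θ) * f θ) volume 0 1 := by
  rw [intervalIntegrable_iff_integrableOn_Icc_of_le zero_le_one]
  obtain ⟨K, hK⟩ := isCompact_Icc.exists_bound_of_continuousOn hg
  refine Integrable.bdd_mul (c := K) hf.2.1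
    (aestronglyMeasurable_comp_poolMean hP (hg.aestronglyMeasurable measurableSet_Icc)) ?_
  filter_upwards [ae_restrict_mem measurableSet_Icc] with θ hθ
  exact hK _ (poolMean_mem_Icc hf hP hθ)

theorem setIntegral_component_poolMean_sub_mul (hf : IsDensity f) (hP : IsPoolingSet P)
    (hθ : θ ∈ P) : ∫ t in connectedComponentIn P θ, (poolMean f P t - t) * f t = 0 := by
  have hlt := hP.compInf_lt_compSup hθ
  have h0 := hP.compInf_nonneg hθ
  have h1 := hP.compSup_le_one hθ
  calc ∫ t in connectedComponentIn P θ, (poolMean f P t - t) * f t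
      = ∫ t in connectedComponentIn P θ, (condMean f (compInf P θ) (compSup P θ) - t) * f t :=
        setIntegral_congr_fun (measurableSet_connectedComponentIn P θ) fun t ht => by
          simp only [poolMean_of_mem_connectedComponentIn ht]
    _ = ∫ t in compInf P θ..compSup P θ,
          (condMean f (compInf P θ) (compSup P θ) - t) * f t := by
        rw [setIntegral_congr_set (hP.connectedComponentIn_ae_eq_Ioc hθ),
          intervalIntegral.integral_of_le hlt.le]
    _ = 0 := integral_condMean_sub_mul (hf.intervalIntegrable h0 hlt.le h1)
        (hf.integral_pos h0 hlt h1).ne'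

theorem integral_poolMean_mul (hf : IsDensity f) (hP : IsPoolingSet P) :
    ∫ θ in (0 : ℝ)..1, poolMean f P θ * f θ = ∫ θ in (0 : ℝ)..1, θ * f θ := by
  have hpool : IntervalIntegrable (fun θ => poolMean f P θ * f θ) volume 0 1 :=
    intervalIntegrable_comp_poolMean_mul hf hP continuousOn_id
  have hid : IntervalIntegrable (fun θ => θ * f θ) volume 0 1 :=
    (hf.intervalIntegrable le_rfl zero_le_one le_rfl).continuousOn_mul continuousOn_id
  have hdiff : IntegrableOn (fun θ => (poolMean f P θ - θ) * f θ) (Icc 0 1) := by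
    simp only [sub_mul]
    exact (intervalIntegrable_iff_integrableOn_Icc_of_le zero_le_one).1 (hpool.sub hid)
  refine sub_eq_zero.1 ?_
  calc (∫ θ in (0 : ℝ)..1, poolMean f P θ * f θ) - ∫ θ in (0 : ℝ)..1, θ * f θ
      = ∫ θ in Icc (0 : ℝ) 1, (poolMean f P θ - θ) * f θ := by
        rw [← intervalIntegral.integral_sub hpool hid, intervalIntegral.integral_of_le zero_le_one,
          integral_Icc_eq_integral_Ioc]
        simp only [sub_mul]
    _ = ∫ θ in P, (poolMean f P θ - θ) * f θ :=
        setIntegral_eq_of_subset_of_forall_sdiff_eq_zero measurableSet_Icc hP.subset_Icc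
          fun θ hθ => by rw [poolMean, if_neg hθ.2, sub_self, zero_mul]
    _ = 0 := hP.setIntegral_eq_zero_of_components (hdiff.mono_set hP.subset_Icc)
        fun θ hθ => setIntegral_component_poolMean_sub_mul hf hP hθ

theorem poolValue_Icc (hf : IsDensity f) : poolValue f u (Icc 0 1) = u (condMean f 0 1) := by
  calc poolValue f u (Icc 0 1)
      = ∫ θ in (0 : ℝ)..1, u (condMean f 0 1) * f θ :=
        intervalIntegral.integral_congr fun θ hθ => by
          rw [uIcc_of_le zero_le_one] at hθ
          simp only [poolMean_Icc hθ]
    _ = u (condMean f 0 1) := by rw [intervalIntegral.integral_const_mul, hf.2.2, mul_one]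

theorem poolValue_le_of_forall_le_affine (hf : IsDensity f) (hP : IsPoolingSet P)
    (hu : ContinuousOn u (Icc 0 1)) {a s : ℝ} (hle : ∀ x ∈ Icc (0 : ℝ) 1, u x ≤ a + s * x) :
    poolValue f u P ≤ a + s * ∫ θ in (0 : ℝ)..1, θ * f θ := by
  have hint := hf.intervalIntegrable le_rfl zero_le_one le_rfl
  have hpool : IntervalIntegrable (fun θ => poolMean f P θ * f θ) volume 0 1 :=
    intervalIntegrable_comp_poolMean_mul hf hP continuousOn_id
  calc poolValue f u P
      ≤ ∫ θ in (0 : ℝ)..1, (a * f θ + s * (poolMean f P θ * f θ)) := by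
        refine intervalIntegral.integral_mono_on zero_le_one
          (intervalIntegrable_comp_poolMean_mul hf hP hu)
          ((hint.const_mul a).add (hpool.const_mul s)) fun θ hθ => ?_
        have := mul_le_mul_of_nonneg_right (hle _ (poolMean_mem_Icc hf hP hθ)) (hf.1 θ hθ).le
        linarith
    _ = a + s * ∫ θ in (0 : ℝ)..1, θ * f θ := by
        rw [intervalIntegral.integral_add (hint.const_mul a) (hpool.const_mul s),
          intervalIntegral.integral_const_mul, intervalIntegral.integral_const_mul, hf.2.2,
          integral_poolMean_mul hf hP, mul_one]

theorem isOptimal_Icc_of_forall_le_affine (hf : IsDensity f) (hu : ContinuousOn u (Icc 0 1))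
    {s : ℝ} (hle : ∀ x ∈ Icc (0 : ℝ) 1,
      u x ≤ u (condMean f 0 1) + s * (x - condMean f 0 1)) :
    IsOptimal f u (Icc 0 1) := by
  refine ⟨⟨univ, isOpen_univ, (univ_inter _).symm⟩, fun Q hQ => ?_⟩
  calc poolValue f u Q
      ≤ (u (condMean f 0 1) - s * condMean f 0 1) + s * ∫ θ in (0 : ℝ)..1, θ * f θ :=
        poolValue_le_of_forall_le_affine hf hQ hu fun x hx => by linarith [hle x hx]
    _ = poolValue f u (Icc 0 1) := by
        rw [← hf.condMean_zero_one, poolValue_Icc hf]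
        ring

end PoolMean

section TangentGap

/-- The height at `x` of the tangent to `u` at `m` above the graph of `u`, where `u'` stands for the
derivative of `u`. The tangency condition of the theorem says that it vanishes. -/
def tangentGap (u u' : ℝ → ℝ) (m x : ℝ) : ℝ := u m + u' m * (x - m) - u x

variable {u u' : ℝ → ℝ} {S : Set ℝ} {m x : ℝ}

theorem tangentGap_pos_of_strictConcaveOn (hu : StrictConcaveOn ℝ S u) (hm : m ∈ S) (hx : x ∈ S)
    (hmx : m < x) (hd : HasDerivAt u (u' m) m) : 0 < tangentGap u u' m x := by
  have := hu.slope_lt_of_hasDerivAt hm hx hmx hd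
  rw [slope_def_field, div_lt_iff₀ (sub_pos.2 hmx)] at this
  rw [tangentGap]
  linarith

theorem tangentGap_neg_of_strictConvexOn (hu : StrictConvexOn ℝ S u) (hm : m ∈ S) (hx : x ∈ S)
    (hmx : m < x) (hd : HasDerivAt u (u' m) m) : tangentGap u u' m x < 0 := by
  have := hu.lt_slope_of_hasDerivAt hm hx hmx hd
  rw [slope_def_field, lt_div_iff₀ (sub_pos.2 hmx)] at this
  rw [tangentGap]
  linarith

theorem tangentGap_nonneg_of_concaveOn (hu : ConcaveOn ℝ S u) (hm : m ∈ S) (hx : x ∈ S)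
    (hd : HasDerivAt u (u' m) m) : 0 ≤ tangentGap u u' m x := by
  rw [tangentGap]
  rcases lt_trichotomy m x with hmx | rfl | hxm
  · have := hu.slope_le_of_hasDerivAt hm hx hmx hd
    rw [slope_def_field, div_le_iff₀ (sub_pos.2 hmx)] at this
    linarith
  · simp only [sub_self, mul_zero, add_zero, le_refl]
  · have := hu.le_slope_of_hasDerivAt hx hm hxm hd
    rw [slope_def_field, le_div_iff₀ (sub_pos.2 hxm)] at this
    linarith

theorem concaveOn_tangentGap (hu : ConvexOn ℝ S u) : ConcaveOn ℝ S (tangentGap u u' m) := by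
  have hlin : ConcaveOn ℝ S fun x => u' m * x := (LinearMap.mulLeft ℝ (u' m)).concaveOn hu.1
  refine ((hlin.sub hu).add_const (u m - u' m * m)).congr fun x _ => ?_
  simp only [Pi.add_apply, Pi.sub_apply, tangentGap]
  ring

theorem tangentGap_nonneg_of_concaveOn_of_convexOn {a b c : ℝ} (hconc : ConcaveOn ℝ (Icc a c) u)
    (hconv : ConvexOn ℝ (Icc c b) u) (hm : m ∈ Icc a c) (hd : HasDerivAt u (u' m) m)
    (hb : 0 ≤ tangentGap u u' m b) (hx : x ∈ Icc a b) : 0 ≤ tangentGap u u' m x := by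
  rcases le_total x c with hxc | hcx
  · exact tangentGap_nonneg_of_concaveOn hconc hm ⟨hx.1, hxc⟩ hd
  · have hc : 0 ≤ tangentGap u u' m c :=
      tangentGap_nonneg_of_concaveOn hconc hm ⟨hm.1.trans hm.2, le_rfl⟩ hd
    have hcb : c ≤ b := hcx.trans hx.2
    exact (le_min hc hb).trans ((concaveOn_tangentGap hconv).min_le_of_mem_Icc
      (left_mem_Icc.2 hcb) (right_mem_Icc.2 hcb) ⟨hcx, hx.2⟩)

end TangentGap

theorem nonneg_right_of_forall_ne_zero {g : ℝ → ℝ} {a b : ℝ} (hab : a ≤ b)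
    (hg : ContinuousOn g (Icc a b)) (ha : 0 < g a) (hne : ∀ x ∈ Ioo a b, g x ≠ 0) : 0 ≤ g b := by
  by_contra! hb
  obtain ⟨x, hx, hgx⟩ := intermediate_value_Ioo' hab hg ⟨hb, ha⟩
  exact hne x hx hgx

theorem tangentGap_condMean_zero_one_nonneg {f u u' : ℝ → ℝ} {θL : ℝ} (hf : IsDensity f)
    (hu : ContinuousOn u (Icc 0 1)) (hd : ∀ θ ∈ Ioo (0 : ℝ) 1, HasDerivAt u (u' θ) θ)
    (hu' : ContinuousOn u' (Ioo 0 1)) (hθL : θL ∈ Ioo (0 : ℝ) 1)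
    (hconc : StrictConcaveOn ℝ (Icc 0 θL) u)
    (hne : ∀ x ∈ Ioo θL 1, tangentGap u u' (condMean f 0 x) x ≠ 0) :
    0 ≤ tangentGap u u' (condMean f 0 1) 1 := by
  have hmean : ∀ x ∈ Icc θL 1, condMean f 0 x ∈ Ioo 0 x := fun x hx =>
    hf.condMean_mem_Ioo le_rfl (hθL.1.trans_le hx.1) hx.2
  have hmaps : MapsTo (condMean f 0) (Icc θL 1) (Ioo 0 1) := fun x hx =>
    ⟨(hmean x hx).1, (hmean x hx).2.trans_le hx.2⟩
  have hcont : ContinuousOn (condMean f 0) (Icc θL 1) :=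
    hf.continuousOn_condMean_zero.mono fun x hx => ⟨hθL.1.trans_le hx.1, hx.2⟩
  have hgap : ContinuousOn (fun x => tangentGap u u' (condMean f 0 x) x) (Icc θL 1) :=
    ((hu.comp hcont (hmaps.mono_right Ioo_subset_Icc_self)).add
      ((hu'.comp hcont hmaps).mul (continuousOn_id.sub hcont))).sub
      (hu.mono (Icc_subset_Icc_left hθL.1.le))
  have hθLm := hmean θL (left_mem_Icc.2 hθL.2.le)
  exact nonneg_right_of_forall_ne_zero
    (g := fun x => tangentGap u u' (condMean f 0 x) x) hθL.2.le hgap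
    (tangentGap_pos_of_strictConcaveOn hconc (Ioo_subset_Icc_self hθLm)
      (right_mem_Icc.2 hθL.1.le) hθLm.2 (hd _ (hmaps (left_mem_Icc.2 hθL.2.le)))) hne

namespace C1AC

variable {u u' u'' : ℝ → ℝ} {a b : ℝ}

theorem continuousOn (hu : C1AC u u' u'') : ContinuousOn u (Icc 0 1) :=
  fun θ hθ => (hu.1 θ hθ).continuousAt.continuousWithinAt

theorem neg (hu : C1AC u u' u'') : C1AC (-u) (-u') (-u'') := by
  obtain ⟨hd, hu', hu'', hftc⟩ := hu
  refine ⟨fun θ hθ => (hd θ hθ).neg, hu'.neg, hu''.neg, fun θ hθ => ?_⟩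
  simp only [Pi.neg_apply, intervalIntegral.integral_neg, hftc θ hθ, neg_add]

theorem intervalIntegrable (hu : C1AC u u' u'') (ha : a ∈ Icc (0 : ℝ) 1)
    (hb : b ∈ Icc (0 : ℝ) 1) : IntervalIntegrable u'' volume a b :=
  (hu.2.2.1.mono_set (uIcc_subset_Icc ha hb)).intervalIntegrable

theorem sub_eq_integral (hu : C1AC u u' u'') (ha : a ∈ Icc (0 : ℝ) 1) (hb : b ∈ Icc (0 : ℝ) 1) :
    u' b - u' a = ∫ θ in a..b, u'' θ := by
  have h0 : (0 : ℝ) ∈ Icc (0 : ℝ) 1 := left_mem_Icc.2 zero_le_one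
  rw [hu.2.2.2 b hb, hu.2.2.2 a ha, add_sub_add_left_eq_sub,
    intervalIntegral.integral_interval_sub_left (hu.intervalIntegrable h0 hb)
      (hu.intervalIntegrable h0 ha)]

theorem strictMonoOn (hu : C1AC u u' u'') (ha : 0 ≤ a) (hb : b ≤ 1)
    (hpos : ∀ θ ∈ Ioo a b, 0 < u'' θ) : StrictMonoOn u' (Icc a b) := by
  intro x hx y hy hxy
  have hx1 := Icc_subset_Icc ha hb hx
  have hy1 := Icc_subset_Icc ha hb hy
  rw [← sub_pos, hu.sub_eq_integral hx1 hy1]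
  exact intervalIntegral.intervalIntegral_pos_of_pos_on (hu.intervalIntegrable hx1 hy1)
    (fun θ hθ => hpos θ ⟨hx.1.trans_lt hθ.1, hθ.2.trans_le hy.2⟩) hxy

theorem strictConvexOn (hu : C1AC u u' u'') (ha : 0 ≤ a) (hb : b ≤ 1)
    (hpos : ∀ θ ∈ Ioo a b, 0 < u'' θ) : StrictConvexOn ℝ (Icc a b) u := by
  refine StrictMonoOn.strictConvexOn_of_deriv (convex_Icc a b)
    (hu.continuousOn.mono (Icc_subset_Icc ha hb)) ?_
  refine ((hu.strictMonoOn ha hb hpos).mono interior_subset).congr fun θ hθ => ?_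
  exact (hu.1 θ (Icc_subset_Icc ha hb (interior_subset hθ))).deriv.symm

theorem strictConcaveOn (hu : C1AC u u' u'') (ha : 0 ≤ a) (hb : b ≤ 1)
    (hneg : ∀ θ ∈ Ioo a b, u'' θ < 0) : StrictConcaveOn ℝ (Icc a b) u :=
  neg_strictConvexOn_iff.1 (hu.neg.strictConvexOn ha hb fun θ hθ => neg_pos.2 (hneg θ hθ))

end C1AC

theorem complete_pooling_optimal_general {f u u' : ℝ → ℝ} {θL : ℝ} (hf : IsDensity f)
    (hu : ContinuousOn u (Icc 0 1)) (hd : ∀ θ ∈ Ioo (0 : ℝ) 1, HasDerivAt u (u' θ) θ)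
    (hu' : ContinuousOn u' (Ioo 0 1)) (hθL : θL ∈ Ioo (0 : ℝ) 1)
    (hconc : StrictConcaveOn ℝ (Icc 0 θL) u) (hconv : StrictConvexOn ℝ (Icc θL 1) u)
    (hno : ¬ ∃ x ∈ Ioo θL (1 : ℝ),
      u (condMean f 0 x) + u' (condMean f 0 x) * (x - condMean f 0 x) = u x) :
    IsOptimal f u (Icc 0 1) ∧ (∫ θ in (0 : ℝ)..1, θ * f θ) ∈ Ioo 0 θL := by
  have hm : condMean f 0 1 ∈ Ioo 0 1 := hf.condMean_mem_Ioo le_rfl one_pos le_rfl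
  have hgap : 0 ≤ tangentGap u u' (condMean f 0 1) 1 :=
    tangentGap_condMean_zero_one_nonneg hf hu hd hu' hθL hconc fun x hx hx0 =>
      hno ⟨x, hx, sub_eq_zero.1 hx0⟩
  have hmL : condMean f 0 1 < θL := by
    by_contra! hLm
    exact hgap.not_gt (tangentGap_neg_of_strictConvexOn hconv ⟨hLm, hm.2.le⟩
      (right_mem_Icc.2 hθL.2.le) hm.2 (hd _ hm))
  refine ⟨isOptimal_Icc_of_forall_le_affine (s := u' (condMean f 0 1)) hf hu
    fun x hx => sub_nonneg.1 ?_, ?_⟩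
  · exact tangentGap_nonneg_of_concaveOn_of_convexOn hconc.concaveOn hconv.convexOn
      ⟨hm.1.le, hmL.le⟩ (hd _ hm) hgap hx
  · exact hf.condMean_zero_one ▸ ⟨hm.1, hmL⟩

/-- one inflection point `θ^L`; if no `θ_*^L ∈ (θ^L,1)` satisfies
the tangency condition, then complete pooling `[0,1]` is optimal for `u`, and
`E_F[θ] ∈ (0,θ^L)`. -/
theorem complete_pooling_optimal (f : ℝ → ℝ) (hf : IsDensity f)
    (u u' u'' : ℝ → ℝ) (hu : C1AC u u' u'')
    (θL : ℝ) (hθL : θL ∈ Ioo (0:ℝ) 1)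
    (hneg : ∀ θ ∈ Ico (0:ℝ) θL, u'' θ < 0)
    (hpos : ∀ θ ∈ Ioc θL (1:ℝ), 0 < u'' θ)
    (hno : ¬ ∃ x ∈ Ioo θL (1:ℝ),
      u (condMean f 0 x) + u' (condMean f 0 x) * (x - condMean f 0 x) = u x) :
    IsOptimal f u (Icc (0:ℝ) 1) ∧ (∫ t in (0:ℝ)..1, t * f t) ∈ Ioo 0 θL :=
  complete_pooling_optimal_general hf hu.continuousOn
    (fun θ hθ => hu.1 θ (Ioo_subset_Icc_self hθ)) (hu.2.1.mono Ioo_subset_Icc_self) hθL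
    (hu.strictConcaveOn le_rfl hθL.2.le fun θ hθ => hneg θ (Ioo_subset_Ico_self hθ))
    (hu.strictConvexOn hθL.1.le le_rfl fun θ hθ => hpos θ (Ioo_subset_Ioc_self hθ)) hno
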